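/- arXiv:0805.3740 — 7 statements merged into one kernel-verified Lean document; each statement's English description precedes it below -/
import Mathlib

section
/- Let E be a real inner product space and let a, b, c, d ∈ E be unit vectors. Then the following operator-norm estimate holds: ‖π_d ∘ (π_c − π_b) ∘ π_a‖ ≤ 2(‖a − c‖·‖c − d‖ + ‖a − b‖·‖b − d‖). -/
/-- Orthogonal projection onto the orthogonal complement of `u`:
`π_u z = z - ⟪z, u⟫ • u`. -/
noncomputable def orthProj {E : Type*} [NormedAddCommGroup E] [InnerProductSpace ℝ E]
    (u : E) : E →L[ℝ] E :=
  ContinuousLinearMap.id ℝ E - (innerSL ℝ u).smulRight u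

section OrthProj

variable {E : Type*} [NormedAddCommGroup E] [InnerProductSpace ℝ E]

theorem orthProj_apply (u z : E) : orthProj u z = z - inner ℝ u z • u := rfl

theorem orthProj_self {u : E} (hu : ‖u‖ = 1) : orthProj u u = 0 := by
  simp [orthProj_apply, hu]

theorem inner_orthProj_self {u : E} (hu : ‖u‖ = 1) (z : E) : inner ℝ u (orthProj u z) = 0 := by
  simp [orthProj_apply, inner_sub_right, inner_smul_right, hu]

theorem norm_orthProj_apply_le {u : E} (hu : ‖u‖ = 1) (z : E) : ‖orthProj u z‖ ≤ ‖z‖ := by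
  have key : ‖orthProj u z‖ ^ 2 = ‖z‖ ^ 2 - inner ℝ u z ^ 2 := by
    rw [orthProj_apply, norm_sub_sq_real, norm_smul, hu, inner_smul_right, real_inner_comm,
      Real.norm_eq_abs, mul_one, sq_abs]
    ring
  exact le_of_sq_le_sq (by nlinarith [sq_nonneg (inner ℝ u z)]) (norm_nonneg z)

theorem norm_orthProj_apply_le_norm_sub {u : E} (hu : ‖u‖ = 1) (z : E) :
    ‖orthProj u z‖ ≤ ‖z - u‖ := by
  simpa [orthProj_self hu] using norm_orthProj_apply_le hu (z - u)

theorem abs_inner_orthProj_le {u : E} (hu : ‖u‖ = 1) (v z : E) :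
    |inner ℝ v (orthProj u z)| ≤ ‖u - v‖ * ‖z‖ := by
  have h : inner ℝ v (orthProj u z) = inner ℝ (v - u) (orthProj u z) := by
    rw [inner_sub_left, inner_orthProj_self hu, sub_zero]
  rw [h, norm_sub_rev]
  exact (abs_real_inner_le_norm _ _).trans
    (mul_le_mul_of_nonneg_left (norm_orthProj_apply_le hu z) (norm_nonneg _))

/-- The rank-one map `π_d ∘ (v ⊗ v) ∘ π_a` is bounded by `‖a - v‖ * ‖v - d‖`. -/
theorem norm_inner_orthProj_smul_orthProj_le {a d : E} (ha : ‖a‖ = 1) (hd : ‖d‖ = 1) (v z : E) :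
    ‖inner ℝ v (orthProj a z) • orthProj d v‖ ≤ ‖a - v‖ * ‖v - d‖ * ‖z‖ := by
  rw [norm_smul, Real.norm_eq_abs, mul_right_comm]
  exact mul_le_mul (abs_inner_orthProj_le ha v z) (norm_orthProj_apply_le_norm_sub hd v)
    (norm_nonneg _) (by positivity)

theorem orthProj_comp_sub_comp_apply (a b c d z : E) :
    (orthProj d).comp ((orthProj c - orthProj b).comp (orthProj a)) z =
      inner ℝ b (orthProj a z) • orthProj d b - inner ℝ c (orthProj a z) • orthProj d c := by
  rw [← map_smul, ← map_smul, ← map_sub, ContinuousLinearMap.comp_apply,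
    ContinuousLinearMap.comp_apply, sub_apply, orthProj_apply c,
    orthProj_apply b, sub_sub_sub_cancel_left]

end OrthProj

theorem stmt1 {E : Type*} [NormedAddCommGroup E] [InnerProductSpace ℝ E]
    (a b c d : E) (ha : ‖a‖ = 1) (hb : ‖b‖ = 1) (hc : ‖c‖ = 1) (hd : ‖d‖ = 1) :
    ‖(orthProj d).comp ((orthProj c - orthProj b).comp (orthProj a))‖ ≤
      2 * (‖a - c‖ * ‖c - d‖ + ‖a - b‖ * ‖b - d‖) := by
  have sharp : ‖(orthProj d).comp ((orthProj c - orthProj b).comp (orthProj a))‖ ≤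
      ‖a - c‖ * ‖c - d‖ + ‖a - b‖ * ‖b - d‖ := by
    refine ContinuousLinearMap.opNorm_le_bound _ (by positivity) fun z => ?_
    rw [orthProj_comp_sub_comp_apply]
    refine (norm_sub_le _ _).trans ?_
    linarith [norm_inner_orthProj_smul_orthProj_le ha hd b z,
      norm_inner_orthProj_smul_orthProj_le ha hd c z]
  exact sharp.trans (le_mul_of_one_le_left (by positivity) one_le_two)
end

section
/- Let T > 0 and let μ and ν be finite signed Borel measures on the interval [0,T]. Define u, v : [0,T] → ℝ by u(t) = μ([0,t]) and v(t) = ν([0,t]), and define v(t−) = ν([0,t)). Then for all 0 ≤ a ≤ b ≤ T the integration by parts formula holds: ∫_{(a,b]} u(t) dν(t) + ∫_{(a,b]} v(t−) dμ(t) = u(b) v(b) − u(a) v(a). -/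
open MeasureTheory Set

lemma measurable_measure_Icc (μ : Measure ℝ) (c : ℝ) :
    Measurable fun t => μ (Icc c t) :=
  Monotone.measurable fun _ _ h => measure_mono (Icc_subset_Icc_right h)

lemma measurable_measure_Ico (μ : Measure ℝ) (c : ℝ) :
    Measurable fun t => μ (Ico c t) :=
  Monotone.measurable fun _ _ h => measure_mono (Ico_subset_Ico_right h)

lemma integrable_toReal_measure_Icc (μ ν : Measure ℝ) [IsFiniteMeasure μ] [IsFiniteMeasure ν]
    (c : ℝ) : Integrable (fun t => (μ (Icc c t)).toReal) ν := by
  refine Integrable.of_bound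
    (measurable_measure_Icc μ c).ennreal_toReal.aestronglyMeasurable (μ univ).toReal
    (ae_of_all _ fun t => ?_)
  rw [Real.norm_of_nonneg ENNReal.toReal_nonneg]
  exact ENNReal.toReal_mono (measure_ne_top _ _) (measure_mono (subset_univ _))

lemma integrable_toReal_measure_Ico (μ ν : Measure ℝ) [IsFiniteMeasure μ] [IsFiniteMeasure ν]
    (c : ℝ) : Integrable (fun t => (μ (Ico c t)).toReal) ν := by
  refine Integrable.of_bound
    (measurable_measure_Ico μ c).ennreal_toReal.aestronglyMeasurable (μ univ).toReal
    (ae_of_all _ fun t => ?_)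
  rw [Real.norm_of_nonneg ENNReal.toReal_nonneg]
  exact ENNReal.toReal_mono (measure_ne_top _ _) (measure_mono (subset_univ _))

/-- Integration by parts for the distribution functions of two finite measures, obtained by
splitting `[c,b]² \ [c,a]²` along the diagonal. -/
lemma lintegral_measure_Icc_add_lintegral_measure_Ico (μ ν : Measure ℝ) [IsFiniteMeasure μ]
    [IsFiniteMeasure ν] {a b c : ℝ} (hca : c ≤ a) (hab : a ≤ b) :
    (∫⁻ t in Ioc a b, μ (Icc c t) ∂ν) + (∫⁻ t in Ioc a b, ν (Ico c t) ∂μ)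
      + μ (Icc c a) * ν (Icc c a) = μ (Icc c b) * ν (Icc c b) := by
  set A : Set (ℝ × ℝ) := {p | c ≤ p.1 ∧ p.1 ≤ p.2 ∧ a < p.2 ∧ p.2 ≤ b} with hA
  set B : Set (ℝ × ℝ) := {p | c ≤ p.2 ∧ p.2 < p.1 ∧ a < p.1 ∧ p.1 ≤ b} with hB
  have mA : MeasurableSet A := by
    rw [hA]; measurability
  have mB : MeasurableSet B := by
    rw [hB]; measurability
  have hμA : μ.prod ν A = ∫⁻ t in Ioc a b, μ (Icc c t) ∂ν := by
    rw [Measure.prod_apply_symm mA, ← lintegral_indicator measurableSet_Ioc]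
    refine lintegral_congr fun t => ?_
    by_cases ht : t ∈ Ioc a b
    · rw [indicator_of_mem ht]
      congr 1; ext s
      simp [hA, ht.1, ht.2]
    · rw [indicator_of_notMem ht]
      convert measure_empty (μ := μ)
      ext s
      simp only [hA, mem_preimage, mem_ofPred_eq, mem_empty_iff_false, iff_false]
      exact fun h => ht h.2.2
  have hμB : μ.prod ν B = ∫⁻ t in Ioc a b, ν (Ico c t) ∂μ := by
    rw [Measure.prod_apply mB, ← lintegral_indicator measurableSet_Ioc]
    refine lintegral_congr fun t => ?_
    by_cases ht : t ∈ Ioc a b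
    · rw [indicator_of_mem ht]
      congr 1; ext s
      simp [hB, ht.1, ht.2]
    · rw [indicator_of_notMem ht]
      convert measure_empty (μ := ν)
      ext s
      simp only [hB, mem_preimage, mem_ofPred_eq, mem_empty_iff_false, iff_false]
      exact fun h => ht h.2.2
  have hAB : Disjoint A B :=
    disjoint_left.2 fun p hp hq => absurd hp.2.1 (not_le.2 hq.2.1)
  have hABC : Disjoint (A ∪ B) (Icc c a ×ˢ Icc c a) := by
    refine disjoint_left.2 fun p hp hq => ?_
    rcases hp with hp | hp
    · exact absurd hq.2.2 (not_le.2 hp.2.2.1)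
    · exact absurd hq.1.2 (not_le.2 hp.2.2.1)
  have hunion : A ∪ B ∪ Icc c a ×ˢ Icc c a = Icc c b ×ˢ Icc c b := by
    ext ⟨s, t⟩
    simp only [hA, hB, mem_union, mem_ofPred_eq, mem_prod, mem_Icc]
    grind
  rw [← hμA, ← hμB, ← measure_union hAB mB, ← Measure.prod_prod, ← Measure.prod_prod,
    ← measure_union hABC (measurableSet_Icc.prod measurableSet_Icc), hunion]

lemma setIntegral_measure_Icc_add_setIntegral_measure_Ico (μ ν : Measure ℝ) [IsFiniteMeasure μ]
    [IsFiniteMeasure ν] {a b c : ℝ} (hca : c ≤ a) (hab : a ≤ b) :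
    (∫ t in Ioc a b, (μ (Icc c t)).toReal ∂ν) + (∫ t in Ioc a b, (ν (Ico c t)).toReal ∂μ)
      = (μ (Icc c b)).toReal * (ν (Icc c b)).toReal
        - (μ (Icc c a)).toReal * (ν (Icc c a)).toReal := by
  have h := lintegral_measure_Icc_add_lintegral_measure_Ico μ ν hca hab
  have hfin : μ (Icc c b) * ν (Icc c b) ≠ ⊤ :=
    ENNReal.mul_ne_top (measure_ne_top _ _) (measure_ne_top _ _)
  rw [← h] at hfin
  obtain ⟨hsum, hC⟩ := ENNReal.add_ne_top.1 hfin
  obtain ⟨hA, hB⟩ := ENNReal.add_ne_top.1 hsum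
  rw [integral_toReal (measurable_measure_Icc μ c).aemeasurable
      (ae_of_all _ fun _ => measure_lt_top _ _),
    integral_toReal (measurable_measure_Ico ν c).aemeasurable
      (ae_of_all _ fun _ => measure_lt_top _ _), eq_sub_iff_add_eq,
    ← ENNReal.toReal_mul, ← ENNReal.toReal_mul, ← h, ENNReal.toReal_add hsum hC,
    ENNReal.toReal_add hA hB]

/-- Integration by parts for right-continuous BV functions `u(t) = μ([0,t])`,
`v(t) = ν([0,t])`, `v(t-) = ν([0,t))`, where the finite signed Borel measures
`μ = μ₁ - μ₂` and `ν = ν₁ - ν₂` are supported in `[0,T]`: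
`∫_{(a,b]} u dν + ∫_{(a,b]} v_- dμ = u(b)v(b) - u(a)v(a)`. -/
theorem stmt6 (T : ℝ) (hT : 0 < T)
    (μ₁ μ₂ ν₁ ν₂ : Measure ℝ)
    [IsFiniteMeasure μ₁] [IsFiniteMeasure μ₂] [IsFiniteMeasure ν₁] [IsFiniteMeasure ν₂]
    (hμ₁ : μ₁ (Icc 0 T)ᶜ = 0) (hμ₂ : μ₂ (Icc 0 T)ᶜ = 0)
    (hν₁ : ν₁ (Icc 0 T)ᶜ = 0) (hν₂ : ν₂ (Icc 0 T)ᶜ = 0)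
    (u v vminus : ℝ → ℝ)
    (hu : ∀ t, u t = (μ₁ (Icc 0 t)).toReal - (μ₂ (Icc 0 t)).toReal)
    (hv : ∀ t, v t = (ν₁ (Icc 0 t)).toReal - (ν₂ (Icc 0 t)).toReal)
    (hvminus : ∀ t, vminus t = (ν₁ (Ico 0 t)).toReal - (ν₂ (Ico 0 t)).toReal)
    (a b : ℝ) (ha : 0 ≤ a) (hab : a ≤ b) (hbT : b ≤ T) :
    ((∫ t in Ioc a b, u t ∂ν₁) - (∫ t in Ioc a b, u t ∂ν₂))
      + ((∫ t in Ioc a b, vminus t ∂μ₁) - (∫ t in Ioc a b, vminus t ∂μ₂))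
      = u b * v b - u a * v a := by
  simp only [hu, hv, hvminus]
  rw [integral_sub (integrable_toReal_measure_Icc _ _ _) (integrable_toReal_measure_Icc _ _ _),
    integral_sub (integrable_toReal_measure_Icc _ _ _) (integrable_toReal_measure_Icc _ _ _),
    integral_sub (integrable_toReal_measure_Ico _ _ _) (integrable_toReal_measure_Ico _ _ _),
    integral_sub (integrable_toReal_measure_Ico _ _ _) (integrable_toReal_measure_Ico _ _ _)]
  linear_combination setIntegral_measure_Icc_add_setIntegral_measure_Ico μ₁ ν₁ ha hab
    - setIntegral_measure_Icc_add_setIntegral_measure_Ico μ₁ ν₂ ha hab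
    - setIntegral_measure_Icc_add_setIntegral_measure_Ico μ₂ ν₁ ha hab
    + setIntegral_measure_Icc_add_setIntegral_measure_Ico μ₂ ν₂ ha hab
end

section
/- Let T > 0 and let μ and ν be finite signed Borel measures on the interval [0,T]. Define u, v : [0,T] → ℝ by u(t) = μ([0,t]) and v(t) = ν([0,t]). Then for all 0 ≤ a ≤ b ≤ T: u(b) v(b) − u(a) v(a) = ∫_{(a,b]} u(t) dν(t) + ∫_{(a,b]} v(t) dμ(t) − Σ_{s ∈ (a,b]} μ({s}) ν({s}), where the sum ranges over the (at most countably many) points s ∈ (a,b] at which both μ and ν have an atom, and converges absolutely. -/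
open MeasureTheory Set

/-- The product measure of the diagonal is the sum of the products of the atoms. -/
theorem MeasureTheory.Measure.prod_diagonal_eq_tsum {α : Type*} [MeasurableSpace α]
    [MeasurableEq α] [MeasurableSingletonClass α] (μ ν : Measure α) [SFinite μ] [SFinite ν] :
    μ.prod ν (diagonal α) = ∑' x, μ {x} * ν {x} := by
  have hatoms : {x : α | 0 < μ {x}}.Countable :=
    Measure.countable_meas_pos_of_disjoint_iUnion (fun _ => measurableSet_singleton _)
      fun _ _ h => by simpa using h
  have hsections : ∀ y : α, (fun x => (x, y)) ⁻¹' diagonal α = {y} := fun y => by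
    ext x; simp
  rw [Measure.prod_apply_symm measurableSet_diagonal]
  simp_rw [hsections]
  rw [← lintegral_add_compl _ hatoms.measurableSet,
    setLIntegral_eq_zero hatoms.measurableSet.compl (fun x hx => by simpa using hx), add_zero,
    lintegral_countable _ hatoms]
  exact tsum_subtype_eq_of_support_subset (f := fun x => μ {x} * ν {x}) fun x hx =>
    pos_iff_ne_zero.2 (left_ne_zero_of_mul hx)

/-- A finite measure on the line, evaluated on lower rays, is integrable against any finite
measure. -/
theorem integrable_measureReal_Iic (μ ν : Measure ℝ) [IsFiniteMeasure μ] [IsFiniteMeasure ν] :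
    Integrable (fun t => μ.real (Iic t)) ν :=
  Integrable.of_bound
    (Monotone.measurable fun _ _ h => measureReal_mono (Iic_subset_Iic.2 h)).aestronglyMeasurable
    (μ.real univ) (.of_forall fun t => by
      simpa [abs_of_nonneg measureReal_nonneg] using
        measureReal_mono (μ := μ) (subset_univ (Iic t)))

/-- The product measure of a closed half-plane bounded by the diagonal, as an integral. -/
theorem measureReal_prod_setOf_le (μ ν : Measure ℝ) [IsFiniteMeasure μ] [IsFiniteMeasure ν] :
    (μ.prod ν).real {p | p.1 ≤ p.2} = ∫ t, μ.real (Iic t) ∂ν := by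
  have hsections : ∀ y : ℝ, (fun x => (x, y)) ⁻¹' {p : ℝ × ℝ | p.1 ≤ p.2} = Iic y := fun y => rfl
  simp only [measureReal_def]
  rw [Measure.prod_apply_symm (measurableSet_le measurable_fst measurable_snd)]
  simp_rw [hsections]
  rw [integral_toReal _ (.of_forall fun _ => measure_lt_top _ _)]
  exact (Monotone.measurable fun _ _ h => measure_mono (Iic_subset_Iic.2 h)).aemeasurable

/-- Integration by parts on the whole line for finite measures, solved for the sum of the
products of the atoms. -/
theorem hasSum_measureReal_singleton_mul (μ ν : Measure ℝ)
    [IsFiniteMeasure μ] [IsFiniteMeasure ν] :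
    HasSum (fun s => μ.real {s} * ν.real {s})
      ((∫ t, μ.real (Iic t) ∂ν) + (∫ t, ν.real (Iic t) ∂μ) - μ.real univ * ν.real univ) := by
  have hle : MeasurableSet {p : ℝ × ℝ | p.1 ≤ p.2} := measurableSet_le measurable_fst measurable_snd
  have hge : MeasurableSet {p : ℝ × ℝ | p.2 ≤ p.1} := measurableSet_le measurable_snd measurable_fst
  have hswap : (μ.prod ν).real {p | p.2 ≤ p.1} = ∫ t, ν.real (Iic t) ∂μ := by
    rw [← measureReal_prod_setOf_le, measureReal_def, measureReal_def, ← Measure.prod_swap,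
      Measure.map_apply measurable_swap hge]
    rfl
  have hunion : {p : ℝ × ℝ | p.1 ≤ p.2} ∪ {p | p.2 ≤ p.1} = univ :=
    eq_univ_of_forall fun p => le_total p.1 p.2
  have hinter : {p : ℝ × ℝ | p.1 ≤ p.2} ∩ {p | p.2 ≤ p.1} = diagonal ℝ := by
    ext p; exact (le_antisymm_iff (a := p.1) (b := p.2)).symm
  have huniv : (μ.prod ν).real univ = μ.real univ * ν.real univ := by
    rw [← univ_prod_univ, measureReal_prod_prod]
  have key := measureReal_union_add_inter (μ := μ.prod ν) (s := {p | p.1 ≤ p.2}) hge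
  rw [hunion, hinter, huniv, hswap, measureReal_prod_setOf_le] at key
  rw [← key, add_sub_cancel_left, measureReal_def, Measure.prod_diagonal_eq_tsum]
  have hsum := ENNReal.hasSum_toReal
    (Measure.prod_diagonal_eq_tsum μ ν ▸ measure_ne_top (μ.prod ν) (diagonal ℝ))
  rw [ENNReal.tsum_toReal_eq fun _ => by finiteness]
  simpa only [ENNReal.toReal_mul, measureReal_def] using hsum

theorem measureReal_Icc_eq_add_Ioc (μ : Measure ℝ) [IsFiniteMeasure μ] {c a t : ℝ}
    (hca : c ≤ a) (hat : a ≤ t) : μ.real (Icc c t) = μ.real (Icc c a) + μ.real (Ioc a t) := by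
  rw [← measureReal_union _ measurableSet_Ioc, Icc_union_Ioc_eq_Icc hca hat]
  exact disjoint_left.2 fun _ h h' => h.2.not_gt h'.1

theorem integrableOn_measureReal_Icc (μ ν : Measure ℝ) [IsFiniteMeasure μ] [IsFiniteMeasure ν]
    (c a b : ℝ) : IntegrableOn (fun t => μ.real (Icc c t)) (Ioc a b) ν := by
  refine ((integrable_measureReal_Iic (μ.restrict (Ici c)) ν).congr
    (.of_forall fun t => ?_)).integrableOn
  simp only [measureReal_restrict_apply measurableSet_Iic]
  rw [inter_comm, Ici_inter_Iic]

theorem setIntegral_measureReal_Icc (μ ν : Measure ℝ) [IsFiniteMeasure μ] [IsFiniteMeasure ν]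
    {c a : ℝ} (b : ℝ) (hca : c ≤ a) :
    ∫ t in Ioc a b, μ.real (Icc c t) ∂ν = μ.real (Icc c a) * ν.real (Ioc a b)
      + ∫ t in Ioc a b, (μ.restrict (Ioc a b)).real (Iic t) ∂ν := by
  have hcongr : ∀ t ∈ Ioc a b, μ.real (Icc c t)
      = μ.real (Icc c a) + (μ.restrict (Ioc a b)).real (Iic t) := fun t ht => by
    rw [measureReal_Icc_eq_add_Ioc μ hca ht.1.le, measureReal_restrict_apply measurableSet_Iic,
      inter_comm, Ioc_inter_Iic, min_eq_right ht.2]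
  rw [setIntegral_congr_fun measurableSet_Ioc hcongr, integral_add (integrable_const _)
    (integrable_measureReal_Iic _ _), integral_const, measureReal_restrict_apply_univ,
    smul_eq_mul, mul_comm]

/-- Integration by parts on `(a, b]` for finite measures, solved for the sum of the products of
the atoms. -/
theorem hasSum_Ioc_measureReal_singleton_mul (μ ν : Measure ℝ)
    [IsFiniteMeasure μ] [IsFiniteMeasure ν] {c a b : ℝ} (hca : c ≤ a) (hab : a ≤ b) :
    HasSum (fun s : Ioc a b => μ.real {(s : ℝ)} * ν.real {(s : ℝ)})
      ((∫ t in Ioc a b, μ.real (Icc c t) ∂ν) + (∫ t in Ioc a b, ν.real (Icc c t) ∂μ)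
        - (μ.real (Icc c b) * ν.real (Icc c b) - μ.real (Icc c a) * ν.real (Icc c a))) := by
  have hrestrict :=
    hasSum_measureReal_singleton_mul (μ.restrict (Ioc a b)) (ν.restrict (Ioc a b))
  have hterms : (fun s => (μ.restrict (Ioc a b)).real {s} * (ν.restrict (Ioc a b)).real {s})
      = (Ioc a b).indicator fun s => μ.real {s} * ν.real {s} := by
    ext s
    simp only [measureReal_restrict_apply (measurableSet_singleton s)]
    by_cases hs : s ∈ Ioc a b
    · rw [indicator_of_mem hs, inter_eq_left.2 (singleton_subset_iff.2 hs)]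
    · rw [indicator_of_notMem hs, singleton_inter_eq_empty.2 hs]
      simp
  rw [hterms, ← hasSum_subtype_iff_indicator] at hrestrict
  refine (congrArg (HasSum _) ?_).mpr hrestrict
  rw [setIntegral_measureReal_Icc μ ν b hca, setIntegral_measureReal_Icc ν μ b hca,
    measureReal_Icc_eq_add_Ioc μ hca hab, measureReal_Icc_eq_add_Ioc ν hca hab,
    measureReal_restrict_apply_univ, measureReal_restrict_apply_univ]
  ring

/-- Product rule with jump correction for right-continuous BV functions
`u(t) = μ([0,t])`, `v(t) = ν([0,t])`, where the finite signed Borel measures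
`μ = μ₁ - μ₂` and `ν = ν₁ - ν₂` are supported in `[0,T]`:
`u(b)v(b) - u(a)v(a) = ∫_{(a,b]} u dν + ∫_{(a,b]} v dμ - Σ_{s ∈ (a,b]} μ({s}) ν({s})`,
and the sum of the atom products converges absolutely. -/
theorem stmt7 (T : ℝ) (hT : 0 < T)
    (μ₁ μ₂ ν₁ ν₂ : Measure ℝ)
    [IsFiniteMeasure μ₁] [IsFiniteMeasure μ₂] [IsFiniteMeasure ν₁] [IsFiniteMeasure ν₂]
    (hμ₁ : μ₁ (Icc 0 T)ᶜ = 0) (hμ₂ : μ₂ (Icc 0 T)ᶜ = 0)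
    (hν₁ : ν₁ (Icc 0 T)ᶜ = 0) (hν₂ : ν₂ (Icc 0 T)ᶜ = 0)
    (u v : ℝ → ℝ)
    (hu : ∀ t, u t = (μ₁ (Icc 0 t)).toReal - (μ₂ (Icc 0 t)).toReal)
    (hv : ∀ t, v t = (ν₁ (Icc 0 t)).toReal - (ν₂ (Icc 0 t)).toReal)
    (a b : ℝ) (ha : 0 ≤ a) (hab : a ≤ b) (hbT : b ≤ T) :
    Summable (fun s : Ioc a b =>
      |((μ₁ {(s : ℝ)}).toReal - (μ₂ {(s : ℝ)}).toReal)
        * ((ν₁ {(s : ℝ)}).toReal - (ν₂ {(s : ℝ)}).toReal)|) ∧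
    u b * v b - u a * v a
      = ((∫ t in Ioc a b, u t ∂ν₁) - (∫ t in Ioc a b, u t ∂ν₂))
        + ((∫ t in Ioc a b, v t ∂μ₁) - (∫ t in Ioc a b, v t ∂μ₂))
        - ∑' s : Ioc a b,
            ((μ₁ {(s : ℝ)}).toReal - (μ₂ {(s : ℝ)}).toReal)
              * ((ν₁ {(s : ℝ)}).toReal - (ν₂ {(s : ℝ)}).toReal) := by
  have hsub : ∀ (μ ν ρ : Measure ℝ) [IsFiniteMeasure μ] [IsFiniteMeasure ν] [IsFiniteMeasure ρ],
      ∫ t in Ioc a b, (μ.real (Icc 0 t) - ν.real (Icc 0 t)) ∂ρ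
        = (∫ t in Ioc a b, μ.real (Icc 0 t) ∂ρ) - ∫ t in Ioc a b, ν.real (Icc 0 t) ∂ρ :=
    fun μ ν ρ _ _ _ => integral_sub (integrableOn_measureReal_Icc μ ρ 0 a b)
      (integrableOn_measureReal_Icc ν ρ 0 a b)
  have hsum := ((hasSum_Ioc_measureReal_singleton_mul μ₁ ν₁ ha hab).add
    (hasSum_Ioc_measureReal_singleton_mul μ₂ ν₂ ha hab)).sub
    ((hasSum_Ioc_measureReal_singleton_mul μ₁ ν₂ ha hab).add
      (hasSum_Ioc_measureReal_singleton_mul μ₂ ν₁ ha hab))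
  replace hsum := hsum.congr_fun (g := fun s : Ioc a b =>
    (μ₁.real {(s : ℝ)} - μ₂.real {(s : ℝ)}) * (ν₁.real {(s : ℝ)} - ν₂.real {(s : ℝ)}))
    fun s => by ring
  simp only [← measureReal_def] at hu hv ⊢
  refine ⟨hsum.summable.abs, ?_⟩
  rw [hsum.tsum_eq]
  simp only [hu, hv, hsub]
  ring
end

section
/- Let E be a real normed space, T > 0, and let f : [0,T] → E be a càdlàg function, i.e. f is right-continuous at every t ∈ [0,T) and has a left-hand limit at every t ∈ (0,T]. Then for every ε > 0 there exist a partition 0 = a_0 < a_1 < ⋯ < a_p = T and a function g : [0,T] → E that is constant on each interval [a_{i−1}, a_i) for i = 1, …, p, such that every value of g is a value of f (g([0,T]) ⊆ f([0,T])), sup_{t ∈ [0,T]} ‖f(t) − g(t)‖ < ε, and the total variation of g on [0,T] is at most the total variation of f on [0,T] (as extended nonnegative reals). -/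
open Set Filter

/-- `φ` is a monotone step map of `[0,t]` into itself, constant on the half-open pieces of a
partition `a 0 < ⋯ < a p` of `[0,t]`, such that `f ∘ φ` is within `ε` of `f` on `[0,t]`. -/
structure IsStepReparam {E : Type*} [NormedAddCommGroup E] (f : ℝ → E) (ε t : ℝ)
    (p : ℕ) (a : ℕ → ℝ) (φ : ℝ → ℝ) : Prop where
  zero : a 0 = 0
  last : a p = t
  lt_succ : ∀ i < p, a i < a (i + 1)
  le_last : ∀ i ≤ p, a i ≤ t
  const : ∀ i < p, ∀ s ∈ Ico (a i) (a (i + 1)), φ s = φ (a i)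
  mapsTo : MapsTo φ (Icc 0 t) (Icc 0 t)
  monotoneOn : MonotoneOn φ (Icc 0 t)
  norm_sub_lt : ∀ s ∈ Icc 0 t, ‖f s - f (φ s)‖ < ε

namespace IsStepReparam

variable {E : Type*} [NormedAddCommGroup E] {f : ℝ → E} {ε t : ℝ}

theorem trivial_zero (hε : 0 < ε) : IsStepReparam f ε 0 0 (fun _ => 0) id where
  zero := rfl
  last := rfl
  lt_succ := by simp
  le_last := by simp
  const := by simp
  mapsTo := mapsTo_id _
  monotoneOn := monotone_id.monotoneOn _
  norm_sub_lt := by simpa using hε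

/-- A step map on `[0,t]` extends to `[0,u]` if `f` stays `ε`-close to `f t` on `[t,u)`. -/
theorem extend {p : ℕ} {a : ℕ → ℝ} {φ : ℝ → ℝ} (h : IsStepReparam f ε t p a φ)
    (hε : 0 < ε) (ht : 0 ≤ t) {u : ℝ} (htu : t < u)
    (hf : ∀ s ∈ Ico t u, ‖f s - f t‖ < ε) :
    IsStepReparam f ε u (p + 1) (fun i => if i ≤ p then a i else u)
      (fun s => if s < t then φ s else if s < u then t else u) where
  zero := by simp [h.zero]
  last := by simp
  lt_succ i hi := by
    rcases Nat.lt_succ_iff_lt_or_eq.1 hi with hi | rfl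
    · simpa [hi.le, Nat.succ_le_of_lt hi] using h.lt_succ i hi
    · simpa [h.last] using htu
  le_last i _ := by
    split_ifs with hi
    · exact (h.le_last i hi).trans htu.le
    · exact le_rfl
  const i hi s hs := by
    rcases Nat.lt_succ_iff_lt_or_eq.1 hi with hi | rfl
    · simp only [hi.le, Nat.succ_le_of_lt hi, if_true] at hs ⊢
      have hst : s < t := hs.2.trans_le (h.le_last _ hi)
      rw [if_pos hst, if_pos (hs.1.trans_lt hst)]
      exact h.const i hi s hs
    · simp only [le_refl, if_true, h.last, Nat.not_succ_le_self, if_false] at hs ⊢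
      simp [hs.1.not_gt, hs.2, htu]
  mapsTo s hs := by
    dsimp only
    split_ifs with h₁ h₂
    · exact Icc_subset_Icc_right htu.le (h.mapsTo ⟨hs.1, h₁.le⟩)
    · exact ⟨ht, htu.le⟩
    · exact ⟨ht.trans htu.le, le_rfl⟩
  monotoneOn x hx y hy hxy := by
    by_cases hxt : x < t
    · have hφx := (h.mapsTo ⟨hx.1, hxt.le⟩).2
      by_cases hyt : y < t
      · simpa [hxt, hyt] using h.monotoneOn ⟨hx.1, hxt.le⟩ ⟨hy.1, hyt.le⟩ hxy
      · simp only [hxt, hyt, if_true, if_false]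
        split_ifs <;> linarith
    · have hyt : ¬ y < t := by linarith
      simp only [hxt, hyt, if_false]
      split_ifs <;> linarith
  norm_sub_lt s hs := by
    split_ifs with h₁ h₂
    · exact h.norm_sub_lt s ⟨hs.1, h₁.le⟩
    · exact hf s ⟨not_lt.1 h₁, h₂⟩
    · obtain rfl : s = u := le_antisymm hs.2 (not_lt.1 h₂)
      simpa using hε

end IsStepReparam

/-- A function on `[0,T]` that is right-continuous with left limits admits an `ε`-close
monotone step reparametrization on all of `[0,T]`. -/
theorem exists_isStepReparam {E : Type*} [NormedAddCommGroup E] {T : ℝ} (hT : 0 < T) {f : ℝ → E}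
    (hright : ∀ t ∈ Ico (0 : ℝ) T, ContinuousWithinAt f (Icc t T) t)
    (hleft : ∀ t ∈ Ioc (0 : ℝ) T, ∃ L : E,
      Tendsto f (nhdsWithin t (Ico (0 : ℝ) t)) (nhds L))
    {ε : ℝ} (hε : 0 < ε) :
    ∃ p a φ, IsStepReparam f ε T p a φ := by
  set S : Set ℝ := {t | t ∈ Icc 0 T ∧ ∃ p a φ, IsStepReparam f ε t p a φ}
  have h0 : (0 : ℝ) ∈ S := ⟨⟨le_rfl, hT.le⟩, _, _, _, .trivial_zero hε⟩
  have hbdd : BddAbove S := ⟨T, fun t ht => ht.1.2⟩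
  have step : ∀ t ∈ S, ∀ u, t < u → u ≤ T → (∀ s ∈ Ico t u, ‖f s - f t‖ < ε) → u ∈ S := by
    rintro t ⟨ht, p, a, φ, h⟩ u htu huT hf
    exact ⟨⟨ht.1.trans htu.le, huT⟩, _, _, _, h.extend hε ht.1 htu hf⟩
  set c := sSup S
  have hc0 : 0 ≤ c := le_csSup hbdd h0
  have hcT : c ≤ T := csSup_le ⟨0, h0⟩ fun t ht => ht.1.2
  have hcS : c ∈ S := by
    rcases hc0.eq_or_lt with h | hcpos
    · rwa [← h]
    obtain ⟨L, hL⟩ := hleft c ⟨hcpos, hcT⟩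
    obtain ⟨δ, hδ, hball⟩ := Metric.tendsto_nhdsWithin_nhds.1 hL (ε / 2) (half_pos hε)
    obtain ⟨t, htS, ht⟩ := exists_lt_of_lt_csSup ⟨0, h0⟩ (sub_lt_self c hδ)
    rcases (le_csSup hbdd htS).eq_or_lt with h | htc
    · rwa [h] at htS
    have near : ∀ s ∈ Ico t c, dist (f s) L < ε / 2 := fun s hs =>
      hball ⟨htS.1.1.trans hs.1, hs.2⟩ <| by
        rw [Real.dist_eq, abs_lt]
        constructor <;> linarith [hs.1, hs.2]
    refine step t htS c htc hcT fun s hs => ?_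
    rw [← dist_eq_norm]
    linarith [dist_triangle_right (f s) (f t) L, near s hs, near t ⟨le_rfl, htc⟩]
  rcases hcT.eq_or_lt with h | hlt
  · exact h ▸ hcS.2
  obtain ⟨δ, hδ, hball⟩ := Metric.continuousWithinAt_iff.1 (hright c ⟨hc0, hlt⟩) ε hε
  have hcu : c < min (c + δ) T := lt_min (by linarith) hlt
  refine absurd (le_csSup hbdd (step c hcS _ hcu (min_le_right _ _) fun s hs => ?_)) hcu.not_ge
  rw [← dist_eq_norm]
  have hs₁ := hs.2.trans_le (min_le_left _ _)
  refine hball ⟨hs.1, (hs.2.trans_le (min_le_right _ _)).le⟩ ?_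
  rw [Real.dist_eq, abs_lt]
  constructor <;> linarith [hs.1]

/-- A càdlàg function on `[0,T]` can be uniformly approximated within `ε` by a
step function whose values are values of `f` and whose total variation does not
exceed that of `f`. -/
theorem stmt14 {E : Type*} [NormedAddCommGroup E] [NormedSpace ℝ E]
    (T : ℝ) (hT : 0 < T) (f : ℝ → E)
    (hright : ∀ t ∈ Ico (0 : ℝ) T, ContinuousWithinAt f (Icc t T) t)
    (hleft : ∀ t ∈ Ioc (0 : ℝ) T, ∃ L : E,
      Tendsto f (nhdsWithin t (Ico (0 : ℝ) t)) (nhds L))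
    (ε : ℝ) (hε : 0 < ε) :
    ∃ (p : ℕ) (a : ℕ → ℝ) (g : ℝ → E),
      0 < p ∧ a 0 = 0 ∧ a p = T ∧ (∀ i < p, a i < a (i + 1)) ∧
      (∀ i < p, ∀ s ∈ Ico (a i) (a (i + 1)), g s = g (a i)) ∧
      (∀ s ∈ Icc (0 : ℝ) T, g s ∈ f '' Icc (0 : ℝ) T) ∧
      (∀ s ∈ Icc (0 : ℝ) T, ‖f s - g s‖ < ε) ∧
      eVariationOn g (Icc 0 T) ≤ eVariationOn f (Icc 0 T) := by
  obtain ⟨p, a, φ, h⟩ := exists_isStepReparam hT hright hleft hε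
  refine ⟨p, a, f ∘ φ, Nat.pos_of_ne_zero ?_, h.zero, h.last, h.lt_succ,
    fun i hi s hs => congrArg f (h.const i hi s hs),
    fun s hs => mem_image_of_mem f (h.mapsTo hs), h.norm_sub_lt,
    eVariationOn.comp_le_of_monotoneOn f φ h.monotoneOn h.mapsTo⟩
  rintro rfl
  exact hT.ne (h.zero.symm.trans h.last)
end

section
/- Let E be a real inner product space, let a, b ∈ E be unit vectors, and let z ∈ E satisfy ⟨z, b⟩ = 0. Then ‖π_a z‖ ≥ (1 − ‖a − b‖²) ‖z‖. -/
open scoped RealInnerProductSpace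

theorem stmt15 {E : Type*} [NormedAddCommGroup E] [InnerProductSpace ℝ E]
    (a b : E) (ha : ‖a‖ = 1) (hb : ‖b‖ = 1) (z : E) (hz : ⟪z, b⟫ = 0) :
    (1 - ‖a - b‖ ^ 2) * ‖z‖ ≤ ‖orthProj a z‖ := by
  have ht : ⟪a, z⟫ ^ 2 ≤ ‖a - b‖ ^ 2 * ‖z‖ ^ 2 := by
    have hab : ⟪a - b, z⟫ = ⟪a, z⟫ := by
      rw [inner_sub_left, real_inner_comm z b, hz, sub_zero]
    rw [← hab, ← mul_pow, ← sq_abs]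
    gcongr
    exact abs_real_inner_le_norm _ _
  have hinner : ⟪orthProj a z, z⟫ = ‖z‖ ^ 2 - ⟪a, z⟫ ^ 2 := by
    simp [orthProj, inner_sub_left, real_inner_smul_left, sq]
  have hle : ⟪orthProj a z, z⟫ ≤ ‖orthProj a z‖ * ‖z‖ := real_inner_le_norm _ _
  rcases (norm_nonneg z).eq_or_lt with h | h
  · simp [← h]
  · refine le_of_mul_le_mul_right ?_ h
    linarith
end

section
/- There exists a constant c₁ > 0 such that for every integer j ≥ 2 and every z ∈ ℝ² with ⟨z, n(1/j)⟩ = 0 (i.e. z tangent to the parabola at the point (1/j, 1/j²)), one has ‖π_{n(−1/j)} z‖ ≤ (1 − c₁ j^{−2}) ‖z‖. -/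
open scoped RealInnerProductSpace

/-- The unit normal `n(a) = (−2a, 1)/√(1 + 4a²)` to the parabola `x₂ = x₁²`
at the point `(a, a²)`. -/
noncomputable def parabolaNormal (a : ℝ) : EuclideanSpace ℝ (Fin 2) :=
  (Real.sqrt (1 + 4 * a ^ 2))⁻¹ • (WithLp.equiv 2 (Fin 2 → ℝ)).symm ![-2 * a, 1]

theorem norm_sq_orthProj {E : Type*} [NormedAddCommGroup E] [InnerProductSpace ℝ E]
    {u : E} (hu : ‖u‖ = 1) (z : E) : ‖orthProj u z‖ ^ 2 = ‖z‖ ^ 2 - ⟪z, u⟫ ^ 2 := by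
  have h : orthProj u z = z - ⟪z, u⟫ • u := by
    simp [orthProj, real_inner_comm]
  rw [h, norm_sub_sq_real, inner_smul_right, norm_smul, hu, mul_one, Real.norm_eq_abs, sq_abs]
  ring

theorem inner_parabolaNormal (z : EuclideanSpace ℝ (Fin 2)) (a : ℝ) :
    ⟪z, parabolaNormal a⟫ = (Real.sqrt (1 + 4 * a ^ 2))⁻¹ * (z 1 - 2 * a * z 0) := by
  simp only [parabolaNormal, inner_smul_right, PiLp.inner_apply, Fin.sum_univ_two]
  congr 1
  simp
  ring

theorem norm_parabolaNormal (a : ℝ) : ‖parabolaNormal a‖ = 1 := by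
  have h : 0 < 1 + 4 * a ^ 2 := by positivity
  have hv : ‖(WithLp.equiv 2 (Fin 2 → ℝ)).symm ![-2 * a, 1]‖ = Real.sqrt (1 + 4 * a ^ 2) := by
    rw [EuclideanSpace.norm_eq]
    congr 1
    simp [Fin.sum_univ_two, mul_pow]
    ring
  rw [parabolaNormal, norm_smul, hv, norm_inv, Real.norm_of_nonneg (Real.sqrt_nonneg _),
    inv_mul_cancel₀ (Real.sqrt_ne_zero'.mpr h)]

/-- The projection along `n(-a)` contracts the tangent line at `(a, a²)` by a factor at most
`1 - 4a²`. -/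
theorem norm_orthProj_parabolaNormal_neg_le {a : ℝ} (ha : 4 * a ^ 2 ≤ 1)
    {z : EuclideanSpace ℝ (Fin 2)} (hz : ⟪z, parabolaNormal a⟫ = 0) :
    ‖orthProj (parabolaNormal (-a)) z‖ ≤ (1 - 4 * a ^ 2) * ‖z‖ := by
  have h : 0 < 1 + 4 * a ^ 2 := by positivity
  rw [inner_parabolaNormal, mul_eq_zero, inv_eq_zero,
    or_iff_right (Real.sqrt_pos.mpr h).ne', sub_eq_zero] at hz
  refine le_of_sq_le_sq ?_ (mul_nonneg (by linarith) (norm_nonneg z))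
  have hnorm : ‖z‖ ^ 2 = z 0 ^ 2 * (1 + 4 * a ^ 2) := by
    rw [EuclideanSpace.real_norm_sq_eq, Fin.sum_univ_two, hz]
    ring
  rw [norm_sq_orthProj (norm_parabolaNormal _), inner_parabolaNormal, mul_pow, mul_pow, hnorm,
    neg_sq, inv_pow, Real.sq_sqrt h.le, hz]
  have heq : z 0 ^ 2 * (1 + 4 * a ^ 2) -
      (1 + 4 * a ^ 2)⁻¹ * (2 * a * z 0 - 2 * -a * z 0) ^ 2 =
      z 0 ^ 2 * (1 - 4 * a ^ 2) ^ 2 / (1 + 4 * a ^ 2) := by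
    field_simp
    ring
  rw [heq, div_le_iff₀ h]
  have hone : 1 ≤ (1 + 4 * a ^ 2) ^ 2 := one_le_pow₀ (by nlinarith [sq_nonneg a])
  calc z 0 ^ 2 * (1 - 4 * a ^ 2) ^ 2
      ≤ z 0 ^ 2 * (1 - 4 * a ^ 2) ^ 2 * (1 + 4 * a ^ 2) ^ 2 :=
        le_mul_of_one_le_right (by positivity) hone
    _ = (1 - 4 * a ^ 2) ^ 2 * (z 0 ^ 2 * (1 + 4 * a ^ 2)) * (1 + 4 * a ^ 2) := by ring

theorem stmt16 :
    ∃ c₁ : ℝ, 0 < c₁ ∧ ∀ j : ℕ, 2 ≤ j →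
      ∀ z : EuclideanSpace ℝ (Fin 2), ⟪z, parabolaNormal (1 / j)⟫ = 0 →
        ‖orthProj (parabolaNormal (-(1 / j))) z‖ ≤ (1 - c₁ / (j : ℝ) ^ 2) * ‖z‖ := by
  refine ⟨4, by norm_num, fun j hj z hz => ?_⟩
  have hj' : (2 : ℝ) ≤ j := by exact_mod_cast hj
  have ha : 4 * (1 / (j : ℝ)) ^ 2 ≤ 1 := by
    rw [one_div, inv_pow, ← div_eq_mul_inv, div_le_one (by positivity)]
    nlinarith
  have h := norm_orthProj_parabolaNormal_neg_le ha hz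
  rwa [one_div, inv_pow, ← div_eq_mul_inv, ← one_div] at h
end

section
/- There exists a constant c₂ ∈ (0,1) such that for every even integer j ≥ 2, the j³/2-fold composition (π_{n(1/j)} ∘ π_{n(−1/j)})^{j³/2} applied to the vector v₀ = (1,0) satisfies ‖(π_{n(1/j)} ∘ π_{n(−1/j)})^{j³/2} v₀‖ ≤ c₂^{j}. -/
open scoped RealInnerProductSpace

/-- The orthogonal projection along the normal at `(a, a²)` is the projection onto the line
spanned by the tangent vector `(1, 2a)`. -/
lemma orthProj_parabolaNormal_apply (a : ℝ) (z : EuclideanSpace ℝ (Fin 2)) :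
    orthProj (parabolaNormal a) z =
      ((z 0 + 2 * a * z 1) / (1 + 4 * a ^ 2)) • !₂[(1 : ℝ), 2 * a] := by
  have hs : 0 < 1 + 4 * a ^ 2 := by positivity
  have hsqrt : (√(1 + 4 * a ^ 2))⁻¹ * (√(1 + 4 * a ^ 2))⁻¹ = (1 + 4 * a ^ 2)⁻¹ := by
    rw [← mul_inv, Real.mul_self_sqrt hs.le]
  have hproj : orthProj (parabolaNormal a) z =
      z - ((1 + 4 * a ^ 2)⁻¹ * (-2 * a * z 0 + z 1)) • !₂[-2 * a, 1] := by
    have hinner : ⟪!₂[-2 * a, 1], z⟫ = -2 * a * z 0 + z 1 := by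
      simp [PiLp.inner_apply, Fin.sum_univ_two]
      ring
    change z - ⟪(√(1 + 4 * a ^ 2))⁻¹ • !₂[-2 * a, 1], z⟫ •
      ((√(1 + 4 * a ^ 2))⁻¹ • !₂[-2 * a, 1]) = _
    rw [real_inner_smul_left, hinner, smul_smul, ← hsqrt]
    congr 2
    ring
  rw [hproj]
  ext i
  fin_cases i <;> simp <;> field_simp <;> ring

lemma orthProj_comp_orthProj_neg_apply (a : ℝ) (z : EuclideanSpace ℝ (Fin 2)) :
    ((orthProj (parabolaNormal a)).comp (orthProj (parabolaNormal (-a)))) z =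
      ((z 0 - 2 * a * z 1) / (1 + 4 * a ^ 2) * ((1 - 4 * a ^ 2) / (1 + 4 * a ^ 2))) •
        !₂[(1 : ℝ), 2 * a] := by
  rw [ContinuousLinearMap.comp_apply, orthProj_parabolaNormal_apply (-a),
    orthProj_parabolaNormal_apply a]
  congr 1
  simp
  ring

lemma orthProj_comp_orthProj_neg_pow_succ_apply (a : ℝ) (m : ℕ) :
    (((orthProj (parabolaNormal a)).comp (orthProj (parabolaNormal (-a)))) ^ (m + 1))
        !₂[(1 : ℝ), 0] =
      (((1 - 4 * a ^ 2) / (1 + 4 * a ^ 2)) ^ (2 * m + 1) / (1 + 4 * a ^ 2)) •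
        !₂[(1 : ℝ), 2 * a] := by
  induction m with
  | zero =>
    rw [zero_add, pow_one, orthProj_comp_orthProj_neg_apply]
    congr 1
    simp
    ring
  | succ m ih =>
    rw [pow_succ', mul_apply_eq_comp, ih, map_smul,
      orthProj_comp_orthProj_neg_apply, smul_smul]
    congr 1
    simp
    ring

lemma norm_orthProj_comp_orthProj_neg_pow_succ_le (a : ℝ) (m : ℕ) :
    ‖(((orthProj (parabolaNormal a)).comp (orthProj (parabolaNormal (-a)))) ^ (m + 1))
        !₂[(1 : ℝ), 0]‖ ≤ |(1 - 4 * a ^ 2) / (1 + 4 * a ^ 2)| ^ (2 * m + 1) := by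
  have hs : 0 < 1 + 4 * a ^ 2 := by positivity
  have hnorm : ‖!₂[(1 : ℝ), 2 * a]‖ ≤ 1 + 4 * a ^ 2 := by
    rw [EuclideanSpace.norm_eq, Real.sqrt_le_left hs.le]
    simp [Fin.sum_univ_two]
    nlinarith [sq_nonneg a, sq_nonneg (a ^ 2)]
  rw [orthProj_comp_orthProj_neg_pow_succ_apply, norm_smul, norm_div, norm_pow, Real.norm_eq_abs,
    Real.norm_of_nonneg hs.le, div_mul_eq_mul_div, div_le_iff₀ hs]
  gcongr

theorem stmt17 :
    ∃ c₂ : ℝ, 0 < c₂ ∧ c₂ < 1 ∧ ∀ j : ℕ, 2 ≤ j → Even j →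
      ‖(((orthProj (parabolaNormal (1 / j))).comp
            (orthProj (parabolaNormal (-(1 / j))))) ^ (j ^ 3 / 2))
          ((WithLp.equiv 2 (Fin 2 → ℝ)).symm ![1, 0])‖ ≤ c₂ ^ j := by
  refine ⟨Real.exp (-1), Real.exp_pos _, by simp, fun j hj heven => ?_⟩
  obtain ⟨m, hm⟩ : ∃ m, j ^ 3 = 2 * (m + 1) := by
    obtain ⟨k, hk⟩ := (heven.pow_of_ne_zero three_ne_zero).two_dvd
    have hpos : 0 < j ^ 3 := by positivity
    exact ⟨k - 1, by omega⟩
  rw [show j ^ 3 / 2 = m + 1 by omega]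
  refine (norm_orthProj_comp_orthProj_neg_pow_succ_le (1 / (j : ℝ)) m).trans ?_
  have hj' : (2 : ℝ) ≤ j := by exact_mod_cast hj
  have hj0 : (0 : ℝ) < j := by linarith
  have hm' : (j : ℝ) ^ 3 = 2 * (m + 1) := by exact_mod_cast hm
  have hratio : (1 - 4 * (1 / (j : ℝ)) ^ 2) / (1 + 4 * (1 / (j : ℝ)) ^ 2) =
      1 - 8 / ((j : ℝ) ^ 2 + 4) := by
    field_simp
    ring
  have hnonneg : 0 ≤ 1 - 8 / ((j : ℝ) ^ 2 + 4) := by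
    rw [sub_nonneg, div_le_one (by positivity)]
    nlinarith
  rw [hratio, abs_of_nonneg hnonneg]
  calc (1 - 8 / ((j : ℝ) ^ 2 + 4)) ^ (2 * m + 1)
      ≤ Real.exp (-(8 / ((j : ℝ) ^ 2 + 4))) ^ (2 * m + 1) := by
        gcongr
        exact Real.one_sub_le_exp_neg _
    _ ≤ Real.exp (-1) ^ j := by
        rw [← Real.exp_nat_mul, ← Real.exp_nat_mul, Real.exp_le_exp]
        have hexp : (j : ℝ) ≤ (2 * m + 1) * (8 / ((j : ℝ) ^ 2 + 4)) := by
          rw [mul_div_assoc', le_div_iff₀ (by positivity)]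
          nlinarith [mul_nonneg (sub_nonneg.2 hj') (sub_nonneg.2 hj'), pow_pos hj0 3,
            mul_nonneg hj0.le (mul_nonneg (sub_nonneg.2 hj') (by linarith : (0 : ℝ) ≤ j + 2))]
        push_cast
        linarith
end
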